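/- Let 𝓛 and 𝓛' be ergodic symmetric generator matrices on the same finite state space Ω with |Ω| ≥ 2 (so both have uniform stationary distribution). For each transition (α,β) of 𝓛', let Γ_{α,β} be a nonempty finite set of 𝓛-paths from α to β together with a flow g_{α,β} : Γ_{α,β} → [0,1] satisfying Σ_{γ∈Γ_{α,β}} g_{α,β}(γ) = 1. Then τ(𝓛) ≤ τ(𝓛') · max over all transitions (σ,η) of 𝓛 of the quantity (1/𝓛[σ→η]) · Σ over all transitions (α,β) of 𝓛' and all paths γ ∈ Γ_{α,β} that use (σ,η) of g_{α,β}(γ)·𝓛'[α→β]·|γ|, where |γ| is the length of γ and each use of (σ,η) in γ is counted with multiplicity. -/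

import Mathlib

/-!
The theorem follows from the comparison of Dirichlet forms `𝓔_{𝓛'}(f,f) ≤ M · 𝓔_𝓛(f,f)`
(`dirForm_comparison`). For a transition `(α,β)` of `𝓛'`, the difference `f α - f β` telescopes
along every path `γ ∈ Γ_{α,β}`, so Cauchy–Schwarz bounds its square by `|γ|` times the sum of the
squared increments along `γ` (`sq_sub_le_pathLen_mul`). Averaging against the unit flow
`g_{α,β}`, rewriting the sum along `γ` as a sum over pairs `(σ,η)` weighted by the number of uses,
and exchanging the order of summation makes the congestion of `(σ,η)` appear as the coefficient of
`(f σ - f η)²`; that congestion is at most `M · 𝓛[σ→η]`.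

Dividing by the variance gives `Gap(𝓛') ≤ M · Gap(𝓛)`. Turning this into an inequality of relaxation
times requires `Gap(𝓛') > 0`, which is a Poincaré inequality for ergodic generators
(`exists_poincare`): along a chain of transitions joining `a` and `b`, `(f a - f b)²` is bounded by a
constant multiple of the Dirichlet form.
-/

open Finset
open scoped Classical

section Markov

variable {Ω : Type*} [Fintype Ω]

/-- A generator matrix: nonnegative off-diagonal entries, zero row sums. -/
def IsGenerator (L : Ω → Ω → ℝ) : Prop :=
  (∀ x y : Ω, x ≠ y → 0 ≤ L x y) ∧ (∀ x : Ω, ∑ y : Ω, L x y = 0)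

/-- A transition of a generator matrix. -/
def IsTransition (L : Ω → Ω → ℝ) (x y : Ω) : Prop := x ≠ y ∧ 0 < L x y

/-- Ergodicity: the directed graph of transitions is strongly connected. -/
def IsErgodicGen (L : Ω → Ω → ℝ) : Prop :=
  ∀ x y : Ω, Relation.ReflTransGen (IsTransition L) x y

/-- Reversibility with respect to a distribution π. -/
def IsReversible (L : Ω → Ω → ℝ) (π : Ω → ℝ) : Prop :=
  ∀ x y : Ω, π x * L x y = π y * L y x

/-- The variance form. -/
noncomputable def VarForm (π : Ω → ℝ) (f : Ω → ℝ) : ℝ :=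
  (1 / 2) * ∑ a : Ω, ∑ b : Ω, π a * π b * (f a - f b) ^ 2

/-- The Dirichlet form. -/
noncomputable def DirForm (π : Ω → ℝ) (L : Ω → Ω → ℝ) (f : Ω → ℝ) : ℝ :=
  (1 / 2) * ∑ a : Ω, ∑ b : Ω, π a * L a b * (f a - f b) ^ 2

/-- The spectral gap: infimum (= minimum) of the Rayleigh quotient over nonconstant functions. -/
noncomputable def specGap (π : Ω → ℝ) (L : Ω → Ω → ℝ) : ℝ :=
  sInf {r : ℝ | ∃ f : Ω → ℝ, (∃ a b : Ω, f a ≠ f b) ∧ r = DirForm π L f / VarForm π f}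

/-- The relaxation time, with the convention that it equals 1 on a one-point space. -/
noncomputable def relaxTime (π : Ω → ℝ) (L : Ω → Ω → ℝ) : ℝ :=
  if ∃ a b : Ω, a ≠ b then 1 / specGap π L else 1

/-- The uniform distribution on a finite type. -/
noncomputable def unif (Ω : Type*) [Fintype Ω] : Ω → ℝ := fun _ => 1 / (Fintype.card Ω : ℝ)

end Markov

section Paths

variable {Ω : Type*} [Fintype Ω] [DecidableEq Ω]

/-- `γ` is an `L`-path from `a` to `b`: a sequence of at least two states, starting at `a`,
ending at `b`, each consecutive pair being a transition of `L`. -/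
def IsLPath (L : Ω → Ω → ℝ) (a b : Ω) (γ : List Ω) : Prop :=
  2 ≤ γ.length ∧ γ.head? = some a ∧ γ.getLast? = some b ∧ γ.Chain' (IsTransition L)

/-- The `ω`-weight of a path: the sum of the weights of its steps. -/
noncomputable def pathWeight (ω : Ω → Ω → ℝ) (γ : List Ω) : ℝ :=
  ((γ.zip γ.tail).map fun p => ω p.1 p.2).sum

/-- The length `|γ|` of a path (number of steps). -/
def pathLen (γ : List Ω) : ℕ := γ.length - 1

/-- The number of times the path `γ` uses the transition `(σ,η)`, with multiplicity. -/
def pathUses (γ : List Ω) (σ η : Ω) : ℕ := (γ.zip γ.tail).count (σ, η)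

end Paths

/-! ### Paths -/

section PathLemmas

variable {Ω : Type*}

lemma pathWeight_nonneg (ω : Ω → Ω → ℝ) (hω : ∀ x y, 0 ≤ ω x y) (γ : List Ω) :
    0 ≤ pathWeight ω γ := by
  unfold pathWeight
  apply List.sum_nonneg
  intro r hr
  obtain ⟨p, -, rfl⟩ := List.mem_map.1 hr
  exact hω _ _

/-- Cauchy–Schwarz for the telescoping sum of `f` along a path. -/
lemma sq_sub_le_pathLen_mul (f : Ω → ℝ) (b : Ω) (l : List Ω) :
    ∀ a : Ω, (a :: l).getLast? = some b →
      (f a - f b) ^ 2 ≤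
        (pathLen (a :: l) : ℝ) * pathWeight (fun x y => (f x - f y) ^ 2) (a :: l) := by
  induction l with
  | nil =>
    intro a h
    simp at h
    subst h
    simp [pathLen]
  | cons c l ih =>
    intro a h
    have h1 := ih c (by simpa [List.getLast?_cons_cons] using h)
    have hS : 0 ≤ pathWeight (fun x y => (f x - f y) ^ 2) (c :: l) :=
      pathWeight_nonneg _ (fun _ _ => sq_nonneg _) _
    have hw : pathWeight (fun x y => (f x - f y) ^ 2) (a :: c :: l)
        = (f a - f c) ^ 2 + pathWeight (fun x y => (f x - f y) ^ 2) (c :: l) := by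
      simp [pathWeight]
    have hl : (pathLen (a :: c :: l) : ℝ) = (pathLen (c :: l) : ℝ) + 1 := by
      simp [pathLen]
    rw [hw, hl]
    generalize pathWeight (fun x y => (f x - f y) ^ 2) (c :: l) = S at *
    have hn : (0 : ℝ) ≤ (pathLen (c :: l) : ℝ) := Nat.cast_nonneg _
    generalize (pathLen (c :: l) : ℝ) = n at *
    have e : f a - f b = (f a - f c) + (f c - f b) := by ring
    rw [e]
    generalize f a - f c = u at *
    generalize f c - f b = v at *
    rcases hn.eq_or_lt with h0 | h0
    · subst h0
      have : v = 0 := by nlinarith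
      subst this
      nlinarith
    · -- The discriminant inequality `n (n u² + S - 2 u v) ≥ (n u - v)²`.
      have : 0 ≤ n * u ^ 2 + S - 2 * u * v := by
        by_contra hneg
        push Not at hneg
        nlinarith [sq_nonneg (n * u - v), mul_neg_of_pos_of_neg h0 hneg]
      nlinarith

lemma pathWeight_eq_sum_uses [Fintype Ω] [DecidableEq Ω] (ω : Ω → Ω → ℝ) (γ : List Ω) :
    pathWeight ω γ = ∑ σ : Ω, ∑ η : Ω, (pathUses γ σ η : ℝ) * ω σ η := by
  unfold pathWeight pathUses
  induction γ.zip γ.tail with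
  | nil => simp
  | cons p t ih =>
    obtain ⟨x, y⟩ := p
    have hpt : ∀ σ η : Ω, ((((x, y) :: t).count (σ, η) : ℕ) : ℝ) * ω σ η
        = ((t.count (σ, η) : ℕ) : ℝ) * ω σ η
          + (if x = σ then (if y = η then ω σ η else 0) else 0) := by
      intro σ η
      by_cases h1 : x = σ <;> by_cases h2 : y = η <;>
        simp [h1, h2, add_mul]
    simp only [hpt, Finset.sum_add_distrib, List.map_cons, List.sum_cons, ih]
    have hs : ∑ σ : Ω, ∑ η : Ω, (if x = σ then (if y = η then ω σ η else 0) else 0) = ω x y := by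
      rw [Finset.sum_eq_single x]
      · simp
      · intro σ _ h
        simp [h.symm]
      · simp
    rw [hs, add_comm]

lemma rel_of_mem_zip {R : Ω → Ω → Prop} {σ η : Ω} :
    ∀ γ : List Ω, γ.IsChain R → (σ, η) ∈ γ.zip γ.tail → R σ η
  | [], _, h => by simp at h
  | [_], _, h => by simp at h
  | x :: y :: l, hc, h => by
    rw [List.isChain_cons_cons] at hc
    simp only [List.tail_cons, List.zip_cons_cons, List.mem_cons, Prod.mk.injEq] at h
    rcases h with ⟨rfl, rfl⟩ | h
    · exact hc.1
    · exact rel_of_mem_zip (y :: l) hc.2 (by simpa using h)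

lemma pathUses_eq_zero [DecidableEq Ω] {L : Ω → Ω → ℝ} {a b σ η : Ω} {γ : List Ω}
    (hγ : IsLPath L a b γ) (h : ¬ IsTransition L σ η) : pathUses γ σ η = 0 := by
  unfold pathUses
  exact List.count_eq_zero.2 fun hm => h (rel_of_mem_zip γ hγ.2.2.2 hm)

lemma IsLPath.sq_sub_le [Fintype Ω] [DecidableEq Ω] {L : Ω → Ω → ℝ} {a b : Ω} {γ : List Ω}
    (hγ : IsLPath L a b γ) (f : Ω → ℝ) :
    (f a - f b) ^ 2 ≤
      (pathLen γ : ℝ) * ∑ σ : Ω, ∑ η : Ω, (pathUses γ σ η : ℝ) * (f σ - f η) ^ 2 := by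
  obtain ⟨-, hh, hl, -⟩ := hγ
  cases γ with
  | nil => simp at hh
  | cons c l =>
    simp only [List.head?_cons, Option.some.injEq] at hh
    subst hh
    rw [← pathWeight_eq_sum_uses (fun x y => (f x - f y) ^ 2)]
    exact sq_sub_le_pathLen_mul f b l c hl

end PathLemmas

/-! ### Dirichlet forms and the Poincaré inequality -/

section Forms

variable {Ω : Type*} [Fintype Ω]

lemma dirForm_unif (L : Ω → Ω → ℝ) (f : Ω → ℝ) :
    DirForm (unif Ω) L f
      = (1 / 2) * (1 / (Fintype.card Ω : ℝ)) * ∑ a : Ω, ∑ b : Ω, L a b * (f a - f b) ^ 2 := by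
  unfold DirForm unif
  rw [mul_assoc, Finset.mul_sum (a := 1 / (Fintype.card Ω : ℝ))]
  simp only [Finset.mul_sum, mul_assoc]

/-- The diagonal entries of a generator are nonpositive, but they do not contribute. -/
lemma IsGenerator.term_nonneg {L : Ω → Ω → ℝ} (hL : IsGenerator L) (f : Ω → ℝ) (a b : Ω) :
    0 ≤ L a b * (f a - f b) ^ 2 := by
  by_cases h : a = b
  · simp [h]
  · exact mul_nonneg (hL.1 a b h) (sq_nonneg _)

lemma IsGenerator.dirForm_nonneg {L : Ω → Ω → ℝ} (hL : IsGenerator L) (f : Ω → ℝ) :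
    0 ≤ DirForm (unif Ω) L f := by
  rw [dirForm_unif]
  exact mul_nonneg (by positivity)
    (Finset.sum_nonneg fun a _ => Finset.sum_nonneg fun b _ => hL.term_nonneg f a b)

lemma varForm_unif_pos (f : Ω → ℝ) (hf : ∃ a b : Ω, f a ≠ f b) : 0 < VarForm (unif Ω) f := by
  obtain ⟨a, b, hab⟩ := hf
  have : Nonempty Ω := ⟨a⟩
  have hn : (0 : ℝ) < Fintype.card Ω := by exact_mod_cast Fintype.card_pos
  have hnn : ∀ x y : Ω, 0 ≤ unif Ω x * unif Ω y * (f x - f y) ^ 2 := fun x y => by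
    unfold unif; positivity
  unfold VarForm
  refine mul_pos (by norm_num) ?_
  refine Finset.sum_pos' (fun x _ => Finset.sum_nonneg fun y _ => hnn x y) ⟨a, by simp, ?_⟩
  refine Finset.sum_pos' (fun y _ => hnn a y) ⟨b, by simp, ?_⟩
  have := sub_ne_zero.2 hab
  unfold unif
  positivity

lemma exists_sq_sub_le_dirForm {L : Ω → Ω → ℝ} (hL : IsGenerator L) {a b : Ω}
    (h : Relation.ReflTransGen (IsTransition L) a b) :
    ∃ C : ℝ, 0 ≤ C ∧ ∀ f : Ω → ℝ, (f a - f b) ^ 2 ≤ C * DirForm (unif Ω) L f := by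
  induction h with
  | refl => exact ⟨0, le_rfl, fun f => by simp⟩
  | @tail b c _ hbc ih =>
    obtain ⟨C, hC, ih⟩ := ih
    have : Nonempty Ω := ⟨a⟩
    have hn : (0 : ℝ) < Fintype.card Ω := by exact_mod_cast Fintype.card_pos
    have hLbc := hbc.2
    refine ⟨2 * C + 2 * (2 * Fintype.card Ω / L b c), by positivity, fun f => ?_⟩
    have hstep : (f b - f c) ^ 2 ≤ (2 * Fintype.card Ω / L b c) * DirForm (unif Ω) L f := by
      have h1 : L b c * (f b - f c) ^ 2 ≤ ∑ x : Ω, ∑ y : Ω, L x y * (f x - f y) ^ 2 :=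
        (Finset.single_le_sum (f := fun y => L b y * (f b - f y) ^ 2)
          (fun y _ => hL.term_nonneg f b y) (Finset.mem_univ c)).trans
        (Finset.single_le_sum (f := fun x => ∑ y : Ω, L x y * (f x - f y) ^ 2)
          (fun x _ => Finset.sum_nonneg fun y _ => hL.term_nonneg f x y) (Finset.mem_univ b))
      rw [dirForm_unif]
      generalize ∑ x : Ω, ∑ y : Ω, L x y * (f x - f y) ^ 2 = S at *
      have e : 2 * (Fintype.card Ω : ℝ) / L b c * (1 / 2 * (1 / (Fintype.card Ω : ℝ)) * S)
          = S / L b c := by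
        field_simp
      rw [e, le_div_iff₀ hLbc]
      linarith
    nlinarith [ih f, sq_nonneg ((f a - f b) - (f b - f c))]

/-- Poincaré inequality for an ergodic generator. -/
lemma exists_poincare {L : Ω → Ω → ℝ} (hL : IsGenerator L) (herg : IsErgodicGen L) :
    ∃ C : ℝ, 0 < C ∧ ∀ f : Ω → ℝ, VarForm (unif Ω) f ≤ C * DirForm (unif Ω) L f := by
  choose C hC0 hC using fun a b => exists_sq_sub_le_dirForm hL (herg a b)
  have hu : ∀ a : Ω, 0 ≤ unif Ω a := fun a => by unfold unif; positivity
  refine ⟨(1 / 2) * ∑ a : Ω, ∑ b : Ω, unif Ω a * unif Ω b * C a b + 1, ?_, fun f => ?_⟩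
  · have : 0 ≤ ∑ a : Ω, ∑ b : Ω, unif Ω a * unif Ω b * C a b :=
      Finset.sum_nonneg fun a _ => Finset.sum_nonneg fun b _ =>
        mul_nonneg (mul_nonneg (hu a) (hu b)) (hC0 a b)
    linarith
  · have h1 : ∑ a : Ω, ∑ b : Ω, unif Ω a * unif Ω b * (f a - f b) ^ 2
        ≤ (∑ a : Ω, ∑ b : Ω, unif Ω a * unif Ω b * C a b) * DirForm (unif Ω) L f := by
      simp only [Finset.sum_mul]
      refine Finset.sum_le_sum fun a _ => Finset.sum_le_sum fun b _ => ?_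
      rw [mul_assoc (unif Ω a * unif Ω b)]
      exact mul_le_mul_of_nonneg_left (hC a b f) (mul_nonneg (hu a) (hu b))
    have h2 := hL.dirForm_nonneg f
    unfold VarForm
    nlinarith

lemma specGap_le_div {L : Ω → Ω → ℝ} (hL : IsGenerator L) (f : Ω → ℝ)
    (hf : ∃ a b : Ω, f a ≠ f b) :
    specGap (unif Ω) L ≤ DirForm (unif Ω) L f / VarForm (unif Ω) f := by
  refine csInf_le ⟨0, ?_⟩ ⟨f, hf, rfl⟩
  rintro r ⟨f, hf, rfl⟩
  exact div_nonneg (hL.dirForm_nonneg f) (varForm_unif_pos f hf).le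

lemma le_specGap [Nontrivial Ω] {L : Ω → Ω → ℝ} {c : ℝ}
    (h : ∀ f : Ω → ℝ, (∃ a b : Ω, f a ≠ f b) →
      c * VarForm (unif Ω) f ≤ DirForm (unif Ω) L f) :
    c ≤ specGap (unif Ω) L := by
  obtain ⟨a, b, hab⟩ := exists_pair_ne Ω
  refine le_csInf ⟨_, fun x => if x = a then 1 else 0, ⟨a, b, by simp [hab.symm]⟩, rfl⟩ ?_
  rintro r ⟨f, hf, rfl⟩
  rw [le_div_iff₀ (varForm_unif_pos f hf)]
  exact h f hf

lemma specGap_pos [Nontrivial Ω] {L : Ω → Ω → ℝ} (hL : IsGenerator L) (herg : IsErgodicGen L) :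
    0 < specGap (unif Ω) L := by
  obtain ⟨C, hC, h⟩ := exists_poincare hL herg
  refine lt_of_lt_of_le (inv_pos.2 hC) (le_specGap fun f _ => ?_)
  rw [inv_mul_le_iff₀ hC]
  exact h f

/-- A comparison of Dirichlet forms gives the reverse comparison of relaxation times. -/
lemma relaxTime_le_of_dirForm_le [Nontrivial Ω] {L L' : Ω → Ω → ℝ}
    (hL : IsGenerator L) (hL' : IsGenerator L') (herg : IsErgodicGen L) (herg' : IsErgodicGen L')
    {M : ℝ} (h : ∀ f : Ω → ℝ, DirForm (unif Ω) L' f ≤ M * DirForm (unif Ω) L f) :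
    relaxTime (unif Ω) L ≤ relaxTime (unif Ω) L' * M := by
  have hG := specGap_pos hL herg
  have hG' := specGap_pos hL' herg'
  have key : ∀ f : Ω → ℝ, (∃ a b : Ω, f a ≠ f b) →
      specGap (unif Ω) L' * VarForm (unif Ω) f ≤ M * DirForm (unif Ω) L f := fun f hf =>
    ((le_div_iff₀ (varForm_unif_pos f hf)).1 (specGap_le_div hL' f hf)).trans (h f)
  -- Any nonconstant function forces `M > 0`, since its left-hand side in `key` is positive.
  have hM : 0 < M := by
    obtain ⟨a, b, hab⟩ := exists_pair_ne Ω
    have hf : ∃ x y : Ω, (fun z => if z = a then (1 : ℝ) else 0) x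
        ≠ (fun z => if z = a then (1 : ℝ) else 0) y := ⟨a, b, by simp [hab.symm]⟩
    exact pos_of_mul_pos_left ((mul_pos hG' (varForm_unif_pos _ hf)).trans_le (key _ hf))
      (hL.dirForm_nonneg _)
  have hle : specGap (unif Ω) L' / M ≤ specGap (unif Ω) L := le_specGap fun f hf => by
    rw [div_mul_eq_mul_div, div_le_iff₀ hM, mul_comm _ M]
    exact key f hf
  have hne : ∃ a b : Ω, a ≠ b := exists_pair_ne Ω
  unfold relaxTime
  rw [if_pos hne, if_pos hne]
  calc 1 / specGap (unif Ω) L ≤ 1 / (specGap (unif Ω) L' / M) :=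
        one_div_le_one_div_of_le (div_pos hG' hM) hle
    _ = 1 / specGap (unif Ω) L' * M := by field_simp

end Forms

/-! ### Comparison through flows -/

/-- A flow of paths whose congestion is at most `M` compares the Dirichlet forms. The congestion
bound is multiplied out, so that no division by `L σ η` occurs. -/
lemma dirForm_comparison {Ω : Type*} [Fintype Ω] [DecidableEq Ω]
    {L L' : Ω → Ω → ℝ} (hgen : IsGenerator L) (hgen' : IsGenerator L')
    {Γ : Ω → Ω → Finset (List Ω)} {g : Ω → Ω → List Ω → ℝ}
    (hΓ : ∀ α β, IsTransition L' α β → ∀ γ ∈ Γ α β, IsLPath L α β γ)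
    (hg : ∀ α β, IsTransition L' α β → ∀ γ ∈ Γ α β, 0 ≤ g α β γ)
    (hsum : ∀ α β, IsTransition L' α β → ∑ γ ∈ Γ α β, g α β γ = 1)
    {M : ℝ}
    (hM : ∀ σ η, IsTransition L σ η →
      (∑ α : Ω, ∑ β : Ω,
        if IsTransition L' α β then
          ∑ γ ∈ Γ α β, (pathUses γ σ η : ℝ) * g α β γ * L' α β * (pathLen γ : ℝ)
        else 0) ≤ M * L σ η) (f : Ω → ℝ) :
    DirForm (unif Ω) L' f ≤ M * DirForm (unif Ω) L f := by
  set T : Ω → Ω → Ω → Ω → ℝ := fun σ η α β =>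
    if IsTransition L' α β then
      ∑ γ ∈ Γ α β, (pathUses γ σ η : ℝ) * g α β γ * L' α β * (pathLen γ : ℝ)
    else 0 with hT
  have hedge : ∀ α β, L' α β * (f α - f β) ^ 2
      ≤ ∑ σ : Ω, ∑ η : Ω, T σ η α β * (f σ - f η) ^ 2 := by
    intro α β
    by_cases ht : IsTransition L' α β
    · have hR : ∑ σ : Ω, ∑ η : Ω, T σ η α β * (f σ - f η) ^ 2
          = ∑ γ ∈ Γ α β, L' α β * (g α β γ * ((pathLen γ : ℝ) *
              ∑ σ : Ω, ∑ η : Ω, (pathUses γ σ η : ℝ) * (f σ - f η) ^ 2)) := by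
        simp only [hT, if_pos ht, Finset.sum_mul, Finset.mul_sum]
        rw [Finset.sum_comm]
        refine (Finset.sum_congr rfl fun η _ => Finset.sum_comm).trans ?_
        rw [Finset.sum_comm]
        refine Finset.sum_congr rfl fun γ _ => ?_
        rw [Finset.sum_comm]
        refine Finset.sum_congr rfl fun σ _ => Finset.sum_congr rfl fun η _ => ?_
        ring
      have hL : L' α β * (f α - f β) ^ 2
          = ∑ γ ∈ Γ α β, L' α β * (g α β γ * (f α - f β) ^ 2) := by
        rw [← Finset.mul_sum, ← Finset.sum_mul, hsum α β ht, one_mul]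
      rw [hR, hL]
      refine Finset.sum_le_sum fun γ hγ => ?_
      exact mul_le_mul_of_nonneg_left
        (mul_le_mul_of_nonneg_left ((hΓ α β ht γ hγ).sq_sub_le f) (hg α β ht γ hγ)) ht.2.le
    · have h0 : L' α β * (f α - f β) ^ 2 = 0 := by
        by_cases hab : α = β
        · simp [hab]
        · have : L' α β = 0 :=
            le_antisymm (not_lt.1 fun h => ht ⟨hab, h⟩) (hgen'.1 α β hab)
          simp [this]
      simp [h0, hT, if_neg ht]
  have hcong : ∀ σ η, (∑ α : Ω, ∑ β : Ω, T σ η α β) * (f σ - f η) ^ 2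
      ≤ M * (L σ η * (f σ - f η) ^ 2) := by
    intro σ η
    by_cases ht : IsTransition L σ η
    · rw [← mul_assoc]
      exact mul_le_mul_of_nonneg_right (hM σ η ht) (sq_nonneg _)
    · by_cases hab : σ = η
      · simp [hab]
      · have hL0 : L σ η = 0 :=
          le_antisymm (not_lt.1 fun h => ht ⟨hab, h⟩) (hgen.1 σ η hab)
        have hT0 : ∀ α β, T σ η α β = 0 := by
          intro α β
          simp only [hT]
          split_ifs with h
          · exact Finset.sum_eq_zero fun γ hγ => by
              simp [pathUses_eq_zero (hΓ α β h γ hγ) ht]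
          · rfl
        simp [hL0, hT0]
  have hswap : ∑ α : Ω, ∑ β : Ω, ∑ σ : Ω, ∑ η : Ω, T σ η α β * (f σ - f η) ^ 2
      = ∑ σ : Ω, ∑ η : Ω, (∑ α : Ω, ∑ β : Ω, T σ η α β) * (f σ - f η) ^ 2 := by
    simp only [Finset.sum_mul]
    calc _ = ∑ p : Ω × Ω, ∑ q : Ω × Ω, T q.1 q.2 p.1 p.2 * (f q.1 - f q.2) ^ 2 := by
          simp only [Fintype.sum_prod_type]
      _ = ∑ q : Ω × Ω, ∑ p : Ω × Ω, T q.1 q.2 p.1 p.2 * (f q.1 - f q.2) ^ 2 := Finset.sum_comm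
      _ = _ := by simp only [Fintype.sum_prod_type]
  have htotal : ∑ α : Ω, ∑ β : Ω, L' α β * (f α - f β) ^ 2
      ≤ M * ∑ σ : Ω, ∑ η : Ω, L σ η * (f σ - f η) ^ 2 := by
    refine (Finset.sum_le_sum fun α _ => Finset.sum_le_sum fun β _ => hedge α β).trans ?_
    rw [hswap]
    simp only [Finset.mul_sum]
    exact Finset.sum_le_sum fun σ _ => Finset.sum_le_sum fun η _ => hcong σ η
  rw [dirForm_unif, dirForm_unif, mul_left_comm M]
  exact mul_le_mul_of_nonneg_left htotal (by positivity)

/-- fractional paths / multi-commodity flows method, unit weights: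
for ergodic symmetric generators `L`, `L'` on the same state space (both with uniform
stationary distribution), and for each transition `(α,β)` of `L'` a nonempty finite set
`Γ_{α,β}` of `L`-paths from `α` to `β` carrying a unit flow `g_{α,β}`,
`τ(𝓛) ≤ τ(𝓛') · max_{(σ,η)} (1/𝓛[σ→η]) Σ_{(α,β)} Σ_{γ ∈ Γ_{α,β}, γ ∋ (σ,η)}
g_{α,β}(γ)·𝓛'[α→β]·|γ|`, uses counted with multiplicity. -/
theorem fractional_paths
    {Ω : Type} [Fintype Ω] [DecidableEq Ω] (hcard : 2 ≤ Fintype.card Ω)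
    (L L' : Ω → Ω → ℝ)
    (hgen : IsGenerator L) (hgen' : IsGenerator L')
    (hsym : ∀ x y : Ω, L x y = L y x) (hsym' : ∀ x y : Ω, L' x y = L' y x)
    (herg : IsErgodicGen L) (herg' : IsErgodicGen L')
    (Γ : Ω → Ω → Finset (List Ω)) (g : Ω → Ω → List Ω → ℝ)
    (hΓ : ∀ α β, IsTransition L' α β →
      (Γ α β).Nonempty ∧ ∀ γ ∈ Γ α β, IsLPath L α β γ)
    (hflow : ∀ α β, IsTransition L' α β →
      (∀ γ ∈ Γ α β, 0 ≤ g α β γ ∧ g α β γ ≤ 1) ∧ ∑ γ ∈ Γ α β, g α β γ = 1)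
    (M : ℝ)
    (hM : IsGreatest
      {r : ℝ | ∃ σ η : Ω, IsTransition L σ η ∧
        r = (1 / L σ η) *
          ∑ α : Ω, ∑ β : Ω,
            if IsTransition L' α β then
              ∑ γ ∈ Γ α β, (pathUses γ σ η : ℝ) * g α β γ * L' α β * (pathLen γ : ℝ)
            else 0} M) :
    relaxTime (unif Ω) L ≤ relaxTime (unif Ω) L' * M := by
  have hnt : Nontrivial Ω := Fintype.one_lt_card_iff_nontrivial.1 hcard
  refine relaxTime_le_of_dirForm_le hgen hgen' herg herg' fun f => ?_
  refine dirForm_comparison hgen hgen' (fun α β h => (hΓ α β h).2)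
    (fun α β h γ hγ => ((hflow α β h).1 γ hγ).1) (fun α β h => (hflow α β h).2) ?_ f
  intro σ η h
  have h1 := hM.2 ⟨σ, η, h, rfl⟩
  rwa [one_div, inv_mul_le_iff₀ h.2, mul_comm (L σ η)] at h1
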